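/- arXiv:1402.1384 — 3 statements merged into one kernel-verified Lean document; each statement's English description precedes it below -/
import Mathlib

section
/- For every ρ ∈ [0,1], Σ > 0 and R ∈ ℝ, the function R' ↦ log Z(R',Σ) has derivative at R equal to (f_a(R,Σ) − R)/Σ². -/
open MeasureTheory ProbabilityTheory

/-- The prior `P₀ = ρ·N(0,1) + (1-ρ)·δ₀`. -/
noncomputable def P0 (ρ : ℝ) : Measure ℝ :=
  ENNReal.ofReal ρ • gaussianReal 0 1 + ENNReal.ofReal (1 - ρ) • Measure.dirac 0

/-- Partition function `Z(R,Σ) = ∫ exp(-(x-R)²/(2Σ²)) dP₀(x)`. -/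
noncomputable def Zpart (ρ R σ : ℝ) : ℝ :=
  ∫ x, Real.exp (-(x - R) ^ 2 / (2 * σ ^ 2)) ∂(P0 ρ)

/-- Posterior mean `f_a(R,Σ)`. -/
noncomputable def fa (ρ R σ : ℝ) : ℝ :=
  (Zpart ρ R σ)⁻¹ * ∫ x, x * Real.exp (-(x - R) ^ 2 / (2 * σ ^ 2)) ∂(P0 ρ)

/-- Posterior variance `f_c(R,Σ)`. -/
noncomputable def fc (ρ R σ : ℝ) : ℝ :=
  (Zpart ρ R σ)⁻¹ * (∫ x, x ^ 2 * Real.exp (-(x - R) ^ 2 / (2 * σ ^ 2)) ∂(P0 ρ))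
    - fa ρ R σ ^ 2

/-!
The likelihood `exp (-(x - s)² / (2v))` is the likelihood `exp (-(x - r)² / (2v))` times
`exp ((s - r) / v * x)` times a factor independent of `x`. Hence, up to an explicit quadratic in `s`
and a constant, `log Z(s)` is the cumulant generating function at `(s - r) / v` of the posterior
given `r`. The derivative at `0` of a cumulant generating function is the mean, here the posterior
mean. The result is Tweedie's formula.
-/

theorem hasDerivAt_cgf_zero {Ω : Type*} {mΩ : MeasurableSpace Ω} {X : Ω → ℝ} {ν : Measure Ω}
    [IsProbabilityMeasure ν] (h : 0 ∈ interior (integrableExpSet X ν)) :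
    HasDerivAt (cgf X ν) (∫ ω, X ω ∂ν) 0 := by
  simpa [deriv_cgf_zero h] using (analyticAt_cgf h).differentiableAt.hasDerivAt

/-- The evidence of the observation `r` when a signal with prior `μ` is observed through additive
Gaussian noise of variance `v`, without the normalizing factor `(2πv)^(-1/2)`: the partition
function of the paper, with `v = Σ²`. -/
noncomputable def gaussianEvidence (μ : Measure ℝ) (v r : ℝ) : ℝ :=
  ∫ x, Real.exp (-(x - r) ^ 2 / (2 * v)) ∂μ

/-- The posterior distribution of a signal with prior `μ` given its observation `r` through additive
Gaussian noise of variance `v`. As a `Measure.tilted`, it is the zero measure when the likelihood is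
not `μ`-integrable. -/
noncomputable def gaussianPosterior (μ : Measure ℝ) (v r : ℝ) : Measure ℝ :=
  μ.tilted fun x => -(x - r) ^ 2 / (2 * v)

section GaussianChannel

open Filter Topology

variable {μ : Measure ℝ} {v r s : ℝ}

theorem integrable_gaussianLikelihood [IsFiniteMeasure μ] (hv : 0 ≤ v) (r : ℝ) :
    Integrable (fun x => Real.exp (-(x - r) ^ 2 / (2 * v))) μ := by
  refine Integrable.of_bound (by fun_prop) 1 (ae_of_all _ fun x => ?_)
  rw [Real.norm_eq_abs, Real.abs_exp, Real.exp_le_one_iff]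
  exact div_nonpos_of_nonpos_of_nonneg (neg_nonpos.2 (sq_nonneg _)) (by positivity)

theorem integral_gaussianPosterior (μ : Measure ℝ) (v r : ℝ) (g : ℝ → ℝ) :
    ∫ x, g x ∂gaussianPosterior μ v r =
      (gaussianEvidence μ v r)⁻¹ * ∫ x, g x * Real.exp (-(x - r) ^ 2 / (2 * v)) ∂μ := by
  rw [gaussianPosterior, integral_tilted, ← integral_const_mul]
  refine integral_congr_ae (ae_of_all _ fun x => ?_)
  simp only [gaussianEvidence, smul_eq_mul]
  ring

theorem gaussianLikelihood_eq_mul (v r s x : ℝ) :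
    Real.exp (-(x - s) ^ 2 / (2 * v)) = Real.exp (-(s ^ 2 - r ^ 2) / (2 * v)) *
      (Real.exp (-(x - r) ^ 2 / (2 * v)) * Real.exp ((s - r) / v * x)) := by
  rw [← Real.exp_add, ← Real.exp_add]
  ring_nf

theorem mem_integrableExpSet_gaussianPosterior
    (hr : Integrable (fun x => Real.exp (-(x - r) ^ 2 / (2 * v))) μ)
    (hs : Integrable (fun x => Real.exp (-(x - s) ^ 2 / (2 * v))) μ) :
    (s - r) / v ∈ integrableExpSet id (gaussianPosterior μ v r) := by
  simp only [gaussianLikelihood_eq_mul v r s] at hs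
  exact (integrable_tilted_iff hr _).2 <|
    (integrable_const_mul_iff (Real.exp_pos _).ne'.isUnit _).1 hs

theorem zero_mem_interior_integrableExpSet_gaussianPosterior (hv : v ≠ 0)
    (h : ∀ᶠ s in 𝓝 r, Integrable (fun x => Real.exp (-(x - s) ^ 2 / (2 * v))) μ) :
    0 ∈ interior (integrableExpSet id (gaussianPosterior μ v r)) := by
  have h_tendsto : Tendsto (fun t => r + v * t) (𝓝 0) (𝓝 r) :=
    Continuous.tendsto' (by fun_prop) _ _ (by simp)
  rw [mem_interior_iff_mem_nhds]
  filter_upwards [h_tendsto.eventually h] with t ht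
  simpa [hv] using mem_integrableExpSet_gaussianPosterior h.self_of_nhds ht

theorem gaussianEvidence_eq_mul_mgf [NeZero μ]
    (hr : Integrable (fun x => Real.exp (-(x - r) ^ 2 / (2 * v))) μ) (s : ℝ) :
    gaussianEvidence μ v s = Real.exp (-(s ^ 2 - r ^ 2) / (2 * v)) *
      (gaussianEvidence μ v r * mgf id (gaussianPosterior μ v r) ((s - r) / v)) := by
  have h_pos : 0 < gaussianEvidence μ v r := integral_exp_pos hr
  rw [mgf, integral_gaussianPosterior, mul_inv_cancel_left₀ h_pos.ne', gaussianEvidence,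
    ← integral_const_mul]
  simp only [gaussianLikelihood_eq_mul v r s, id_eq, mul_comm (Real.exp ((s - r) / v * _))]

theorem log_gaussianEvidence_eq_add_cgf [NeZero μ]
    (hr : Integrable (fun x => Real.exp (-(x - r) ^ 2 / (2 * v))) μ)
    (hs : Integrable (fun x => Real.exp (-(x - s) ^ 2 / (2 * v))) μ) :
    Real.log (gaussianEvidence μ v s) = -(s ^ 2 - r ^ 2) / (2 * v) +
      (Real.log (gaussianEvidence μ v r) + cgf id (gaussianPosterior μ v r) ((s - r) / v)) := by
  have h_prob : IsProbabilityMeasure (gaussianPosterior μ v r) := isProbabilityMeasure_tilted hr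
  have h_evidence : 0 < gaussianEvidence μ v r := integral_exp_pos hr
  have h_mgf : 0 < mgf id (gaussianPosterior μ v r) ((s - r) / v) :=
    mgf_pos (mem_integrableExpSet_gaussianPosterior hr hs)
  rw [gaussianEvidence_eq_mul_mgf hr, Real.log_mul (Real.exp_pos _).ne' (by positivity),
    Real.log_exp, Real.log_mul h_evidence.ne' h_mgf.ne', cgf]

theorem stmt0_general [NeZero μ] (hv : v ≠ 0)
    (h : ∀ᶠ s in 𝓝 r, Integrable (fun x => Real.exp (-(x - s) ^ 2 / (2 * v))) μ) :
    HasDerivAt (fun s => Real.log (gaussianEvidence μ v s))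
      ((∫ x, x ∂gaussianPosterior μ v r - r) / v) r := by
  have hr := h.self_of_nhds
  have h_prob : IsProbabilityMeasure (gaussianPosterior μ v r) := isProbabilityMeasure_tilted hr
  have h_cgf : HasDerivAt (fun s => cgf id (gaussianPosterior μ v r) ((s - r) / v))
      ((∫ x, x ∂gaussianPosterior μ v r) * (1 / v)) r := by
    refine HasDerivAt.comp (h₂ := cgf id _) r ?_ (((hasDerivAt_id r).sub_const r).div_const v)
    simpa using hasDerivAt_cgf_zero (zero_mem_interior_integrableExpSet_gaussianPosterior hv h)
  have h_quad : HasDerivAt (fun s => -(s ^ 2 - r ^ 2) / (2 * v)) (-(2 * r) / (2 * v)) r := by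
    simpa using (((hasDerivAt_pow 2 r).sub_const (r ^ 2)).neg).div_const (2 * v)
  have h_log : (fun s => Real.log (gaussianEvidence μ v s)) =ᶠ[𝓝 r] fun s =>
      -(s ^ 2 - r ^ 2) / (2 * v) + (Real.log (gaussianEvidence μ v r) +
        cgf id (gaussianPosterior μ v r) ((s - r) / v)) :=
    h.mono fun s hs => log_gaussianEvidence_eq_add_cgf hr hs
  refine ((h_quad.add (h_cgf.const_add _)).congr_of_eventuallyEq h_log).congr_deriv ?_
  ring

end GaussianChannel

theorem isProbabilityMeasure_P0 {ρ : ℝ} (hρ : ρ ∈ Set.Icc (0 : ℝ) 1) :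
    IsProbabilityMeasure (P0 ρ) :=
  ⟨by simp [P0, ← ENNReal.ofReal_add hρ.1 (sub_nonneg.2 hρ.2)]⟩

theorem fa_eq_integral_gaussianPosterior (ρ R σ : ℝ) :
    fa ρ R σ = ∫ x, x ∂gaussianPosterior (P0 ρ) (σ ^ 2) R :=
  (integral_gaussianPosterior (P0 ρ) (σ ^ 2) R id).symm

/-- for every ρ ∈ [0,1], Σ > 0 and R ∈ ℝ, the function
`R' ↦ log Z(R',Σ)` has derivative at `R` equal to `(f_a(R,Σ) − R)/Σ²`. -/
theorem stmt0 (ρ : ℝ) (hρ : ρ ∈ Set.Icc (0 : ℝ) 1) (σ : ℝ) (hσ : 0 < σ) (R : ℝ) :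
    HasDerivAt (fun R' => Real.log (Zpart ρ R' σ)) ((fa ρ R σ - R) / σ ^ 2) R := by
  have := isProbabilityMeasure_P0 hρ
  rw [fa_eq_integral_gaussianPosterior]
  exact stmt0_general (pow_ne_zero 2 hσ.ne')
    (.of_forall (integrable_gaussianLikelihood (sq_nonneg σ)))
end

section
/- (g_out is the ω-score.) Let p : ℝ → ℝ be measurable and nonnegative, V > 0 and ω ∈ ℝ, and suppose there exists V' > V such that ∫ (1 + |z|)·p(z)·exp(−(z−ω)²/(2V')) dz < ∞ and Z_out(ω,V) > 0. Then the function ω' ↦ log Z_out(ω',V) has derivative at ω equal to g_out(ω,V). -/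
open MeasureTheory

/-- Output-channel partition function `Z_out(ω,V) = ∫ p(z)·exp(−(z−ω)²/(2V)) dz`. -/
noncomputable def Zout (p : ℝ → ℝ) (ω V : ℝ) : ℝ :=
  ∫ z, p z * Real.exp (-(z - ω) ^ 2 / (2 * V))

/-- The output function
`g_out(ω,V) = [∫ p(z)·(z−ω)·exp(−(z−ω)²/(2V)) dz]/(V·Z_out(ω,V))`. -/
noncomputable def gout (p : ℝ → ℝ) (ω V : ℝ) : ℝ :=
  (∫ z, p z * (z - ω) * Real.exp (-(z - ω) ^ 2 / (2 * V))) / (V * Zout p ω V)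

/-- The normalized per-measurement partition function `Z^μ(ω,V) = (2πV)^{−1/2}·Z_out(ω,V)`. -/
noncomputable def Zmu (p : ℝ → ℝ) (ω V : ℝ) : ℝ :=
  (Real.sqrt (2 * Real.pi * V))⁻¹ * Zout p ω V

/-!
Completing the square around `ω`,
`exp (-(z - x)² / (2V)) = exp (-(x - ω)² / (2V)) * exp (t * (z - ω)) * exp (-(z - ω)² / (2V))` with
`t = (x - ω) / V`. Hence `x ↦ Z_out(x, V)` is, up to a factor which is stationary at `ω`, a Laplace
transform in `t`, and a Laplace transform may be differentiated under the integral sign in the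
interior of its domain of convergence. Convergence near `ω` holds because the ratio of two Gaussian
weights is bounded when the one in the denominator has the larger variance.
-/

open scoped Topology

theorem integrable_of_integrable_one_add_norm_smul {α E F : Type*} [MeasurableSpace α]
    {μ : Measure α} [NormedAddCommGroup E] [NormedAddCommGroup F] [NormedSpace ℝ F]
    {g : α → E} {f : α → F} (hg : AEStronglyMeasurable g μ)
    (hint : Integrable (fun a => (1 + ‖g a‖) • f a) μ) : Integrable f μ := by
  have hpos (a : α) : 0 < 1 + ‖g a‖ := by positivity
  have hinv (a : α) : ‖(1 + ‖g a‖)⁻¹‖ ≤ 1 := by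
    rw [Real.norm_of_nonneg (inv_nonneg.2 (hpos a).le)]
    exact inv_le_one_of_one_le₀ (le_add_of_nonneg_right (norm_nonneg _))
  have hmeas : AEStronglyMeasurable (fun a => (1 + ‖g a‖)⁻¹) μ :=
    (hg.norm.aemeasurable.const_add 1).inv.aestronglyMeasurable
  refine (hint.bdd_smul 1 hmeas (.of_forall hinv)).congr (.of_forall fun a => ?_)
  exact inv_smul_smul₀ (hpos a).ne' (f a)

section LaplaceTransform

/-- The slack `ε / 2` in the exponent absorbs the factor `|x|`. -/
theorem abs_mul_exp_mul_le {t t₀ ε : ℝ} (hε : 0 < ε) (ht : |t - t₀| ≤ ε / 2) (x : ℝ) :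
    |x| * Real.exp (t * x) ≤
      2 / ε * (Real.exp ((t₀ + ε) * x) + Real.exp ((t₀ - ε) * x)) := by
  have habs : |x| ≤ 2 / ε * Real.exp (ε / 2 * |x|) := by
    calc |x| = 2 / ε * (ε / 2 * |x|) := by field_simp
      _ ≤ 2 / ε * Real.exp (ε / 2 * |x|) := by
        gcongr
        linarith [Real.add_one_le_exp (ε / 2 * |x|)]
  have hexp : t * x ≤ t₀ * x + ε / 2 * |x| := by
    have : (t - t₀) * x ≤ ε / 2 * |x| :=
      (le_abs_self _).trans ((abs_mul _ _).trans_le (by gcongr))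
    linarith
  calc |x| * Real.exp (t * x)
      ≤ 2 / ε * Real.exp (ε / 2 * |x|) * Real.exp (t₀ * x + ε / 2 * |x|) := by gcongr
    _ = 2 / ε * (Real.exp (t₀ * x) * Real.exp |ε * x|) := by
      rw [mul_assoc, ← Real.exp_add, ← Real.exp_add, abs_mul, abs_of_pos hε]
      ring_nf
    _ ≤ 2 / ε * (Real.exp (t₀ * x) * (Real.exp (ε * x) + Real.exp (-(ε * x)))) := by
      gcongr
      exact Real.exp_abs_le _
    _ = 2 / ε * (Real.exp ((t₀ + ε) * x) + Real.exp ((t₀ - ε) * x)) := by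
      rw [mul_add, ← Real.exp_add, ← Real.exp_add]
      ring_nf

variable {Ω E : Type*} [MeasurableSpace Ω] {μ : Measure Ω}
  [NormedAddCommGroup E] [NormedSpace ℝ E] {X : Ω → ℝ} {f : Ω → E}

theorem hasDerivAt_integral_exp_mul_smul {t₀ : ℝ} (hX : AEMeasurable X μ)
    (hint : ∀ᶠ t in 𝓝 t₀, Integrable (fun a => Real.exp (t * X a) • f a) μ) :
    HasDerivAt (fun t => ∫ a, Real.exp (t * X a) • f a ∂μ)
      (∫ a, (X a * Real.exp (t₀ * X a)) • f a ∂μ) t₀ := by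
  obtain ⟨ε, hε, hball⟩ := Metric.nhds_basis_closedBall.eventually_iff.1 hint
  have hright := hball (x := t₀ + ε) (by simp [abs_of_pos hε])
  have hleft := hball (x := t₀ - ε) (by simp [abs_of_pos hε])
  have hderiv (a : Ω) (t : ℝ) : HasDerivAt (fun t => Real.exp (t * X a) • f a)
      ((X a * Real.exp (t * X a)) • f a) t := by
    simpa [mul_comm] using ((hasDerivAt_mul_const (x := t) (X a)).exp).smul_const (f a)
  refine (hasDerivAt_integral_of_dominated_loc_of_deriv_le
    (F' := fun t a => (X a * Real.exp (t * X a)) • f a)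
    (Metric.closedBall_mem_nhds t₀ (half_pos hε))
    (hint.mono fun t ht => ht.aestronglyMeasurable) hint.self_of_nhds ?_
    (.of_forall fun a t ht => ?_) ((hright.norm.add hleft.norm).const_mul (2 / ε))
    (.of_forall fun a t _ => hderiv a t)).2
  · simp only [mul_smul]
    exact hX.aestronglyMeasurable.smul hint.self_of_nhds.aestronglyMeasurable
  · calc ‖(X a * Real.exp (t * X a)) • f a‖ = |X a| * Real.exp (t * X a) * ‖f a‖ := by
          rw [norm_smul, norm_mul, Real.norm_eq_abs, Real.norm_eq_abs, Real.abs_exp]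
      _ ≤ 2 / ε * (Real.exp ((t₀ + ε) * X a) + Real.exp ((t₀ - ε) * X a)) * ‖f a‖ := by
          gcongr ?_ * _
          exact abs_mul_exp_mul_le hε (Metric.mem_closedBall.1 ht) (X a)
      _ = 2 / ε * (‖Real.exp ((t₀ + ε) * X a) • f a‖ + ‖Real.exp ((t₀ - ε) * X a) • f a‖) := by
          simp only [norm_smul, Real.norm_eq_abs, Real.abs_exp]
          ring

end LaplaceTransform

section GaussianWeight

theorem exp_neg_sub_sq_div_eq_mul (V ω x z : ℝ) :
    Real.exp (-(z - x) ^ 2 / (2 * V)) = Real.exp (-(x - ω) ^ 2 / (2 * V)) *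
      (Real.exp ((x - ω) / V * (z - ω)) * Real.exp (-(z - ω) ^ 2 / (2 * V))) := by
  rw [← Real.exp_add, ← Real.exp_add]
  ring_nf

theorem neg_sub_sq_div_le {V V' : ℝ} (hV : 0 < V) (hVV' : V < V') (c x z : ℝ) :
    -(z - x) ^ 2 / (2 * V) ≤ (x - c) ^ 2 / (2 * (V' - V)) + -(z - c) ^ 2 / (2 * V') := by
  have hV' : 0 < V' := hV.trans hVV'
  have hsub : 0 < V' - V := sub_pos.2 hVV'
  have hsq : (x - c) ^ 2 / (2 * (V' - V)) + -(z - c) ^ 2 / (2 * V') - -(z - x) ^ 2 / (2 * V) =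
      ((z - x) * V' - (z - c) * V) ^ 2 / (2 * V * V' * (V' - V)) := by
    field_simp
    ring
  rw [← sub_nonneg, hsq]
  positivity

variable {μ : Measure ℝ} {p : ℝ → ℝ}

theorem integrable_mul_exp_neg_sub_sq_div {V V' c : ℝ} (hV : 0 < V) (hVV' : V < V')
    (hint : Integrable (fun z => p z * Real.exp (-(z - c) ^ 2 / (2 * V'))) μ) (x : ℝ) :
    Integrable (fun z => p z * Real.exp (-(z - x) ^ 2 / (2 * V))) μ := by
  have hratio (z : ℝ) : ‖Real.exp (-(z - x) ^ 2 / (2 * V) - -(z - c) ^ 2 / (2 * V'))‖ ≤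
      Real.exp ((x - c) ^ 2 / (2 * (V' - V))) := by
    rw [Real.norm_eq_abs, Real.abs_exp, Real.exp_le_exp, sub_le_iff_le_add]
    exact neg_sub_sq_div_le hV hVV' c x z
  refine (hint.mul_bdd (by fun_prop) (.of_forall hratio)).congr (.of_forall fun z => ?_)
  beta_reduce
  rw [mul_assoc, ← Real.exp_add, add_sub_cancel]

theorem eventually_integrable_exp_mul_sub {V ω : ℝ} (hV : V ≠ 0)
    (hint : ∀ᶠ x in 𝓝 ω, Integrable (fun z => p z * Real.exp (-(z - x) ^ 2 / (2 * V))) μ) :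
    ∀ᶠ t in 𝓝 0, Integrable
      (fun z => Real.exp (t * (z - ω)) • (p z * Real.exp (-(z - ω) ^ 2 / (2 * V)))) μ := by
  have htendsto : Filter.Tendsto (fun t => ω + V * t) (𝓝 0) (𝓝 ω) :=
    Continuous.tendsto' (by fun_prop) _ _ (by simp)
  filter_upwards [htendsto.eventually hint] with t ht
  refine (ht.const_mul (Real.exp (-(V * t) ^ 2 / (2 * V)))⁻¹).congr (.of_forall fun z => ?_)
  beta_reduce
  rw [exp_neg_sub_sq_div_eq_mul V ω, add_sub_cancel_left, mul_div_cancel_left₀ t hV, smul_eq_mul]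
  field_simp

end GaussianWeight

theorem Zout_eq_exp_mul_integral (p : ℝ → ℝ) (ω x V : ℝ) :
    Zout p x V = Real.exp (-(x - ω) ^ 2 / (2 * V)) *
      ∫ z, Real.exp ((x - ω) / V * (z - ω)) • (p z * Real.exp (-(z - ω) ^ 2 / (2 * V))) := by
  rw [Zout, ← integral_const_mul]
  congr with z
  rw [exp_neg_sub_sq_div_eq_mul V ω x z, smul_eq_mul]
  ring

theorem hasDerivAt_Zout {p : ℝ → ℝ} {V ω : ℝ} (hV : V ≠ 0)
    (hint : ∀ᶠ x in 𝓝 ω, Integrable (fun z => p z * Real.exp (-(z - x) ^ 2 / (2 * V)))) :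
    HasDerivAt (fun x => Zout p x V)
      ((∫ z, p z * (z - ω) * Real.exp (-(z - ω) ^ 2 / (2 * V))) / V) ω := by
  have hprefactor : HasDerivAt (fun x => Real.exp (-(x - ω) ^ 2 / (2 * V))) 0 ω := by
    simpa using ((((hasDerivAt_id ω).sub_const ω).pow 2).neg.div_const (2 * V)).exp
  have hparam : HasDerivAt (fun x => (x - ω) / V) (1 / V) ω :=
    ((hasDerivAt_id ω).sub_const ω).div_const V
  have hlaplace := hasDerivAt_integral_exp_mul_smul (by fun_prop)
    (eventually_integrable_exp_mul_sub hV hint)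
  rw [show (0 : ℝ) = (ω - ω) / V by simp] at hlaplace
  refine ((hprefactor.mul (hlaplace.comp ω hparam)).congr_of_eventuallyEq
    (.of_forall fun x => Zout_eq_exp_mul_integral p ω x V)).congr_deriv ?_
  simp [mul_assoc, mul_left_comm, div_eq_mul_inv]

theorem stmt13_general {p : ℝ → ℝ} {V ω : ℝ} (hV : V ≠ 0)
    (hint : ∀ᶠ x in 𝓝 ω, Integrable (fun z => p z * Real.exp (-(z - x) ^ 2 / (2 * V))))
    (hZ : 0 < Zout p ω V) :
    HasDerivAt (fun x => Real.log (Zout p x V)) (gout p ω V) ω := by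
  simpa only [gout, div_div] using (hasDerivAt_Zout hV hint).log hZ.ne'

/-- `g_out` is the ω-score: under a domination hypothesis at some `V' > V`
and `Z_out(ω,V) > 0`, the function `ω' ↦ log Z_out(ω',V)` has derivative `g_out(ω,V)`
at `ω`. -/
theorem stmt13 (p : ℝ → ℝ) (hp : Measurable p) (hp0 : ∀ z, 0 ≤ p z)
    (V ω : ℝ) (hV : 0 < V)
    (hdom : ∃ V' > V,
      Integrable (fun z => (1 + |z|) * p z * Real.exp (-(z - ω) ^ 2 / (2 * V'))))
    (hZ : 0 < Zout p ω V) :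
    HasDerivAt (fun ω' => Real.log (Zout p ω' V)) (gout p ω V) ω := by
  obtain ⟨V', hVV', hint⟩ := hdom
  exact stmt13_general hV.ne' (.of_forall (integrable_mul_exp_neg_sub_sq_div hV hVV'
    (integrable_of_integrable_one_add_norm_smul aestronglyMeasurable_id
      (by simpa [mul_assoc] using hint)))) hZ
end

section
/- (Variance identity for the normalized log-partition.) Let p : ℝ → ℝ be measurable and nonnegative, V > 0 and ω ∈ ℝ, and suppose there exists V' > V such that ∫ (1 + z²)·p(z)·exp(−(z−ω)²/(2V')) dz < ∞ and Z_out(ω,V) > 0. Let Z^μ(ω,V) = (2πV)^{−1/2}·Z_out(ω,V). Then the function V'' ↦ log Z^μ(ω,V'') has derivative at V equal to (1/2)·(g'_out(ω,V) + g_out(ω,V)²), where g'_out(ω,V) denotes the derivative at ω of the function ω' ↦ g_out(ω',V). -/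
open MeasureTheory

/-!
The identity is the heat equation in logarithmic form: convolution with a Gaussian of variance `V`
gives `∂_V Z^μ = ½ ∂_ω² Z^μ` and `g_out = ∂_ω log Z^μ`, hence
`∂_V log Z^μ = ½ (∂_ω² log Z^μ + (∂_ω log Z^μ)²)`. In terms of the unnormalized Gaussian moments
`M_n = ∫ p(z) (z - ω)^n exp (-(z - ω)² / (2V)) dz`, both sides equal `½ (M₂ / (V² M₀) - 1 / V)`.

Differentiation under the integral sign rests on the gap `V < V'`: near `(ω, V)`, a polynomial
times the Gaussian weight is dominated by a multiple of the weight of centre `ω` and variance `V'`.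
-/

lemma hasDerivAt_integral_mul_of_abs_deriv_le {α : Type*} [MeasurableSpace α] {μ : Measure α}
    {f w : α → ℝ} {k k' : ℝ → α → ℝ} {x₀ : ℝ} {s : Set ℝ} (hs : s ∈ nhds x₀)
    (hf : AEStronglyMeasurable f μ) (hfw : Integrable (fun a => f a * w a) μ)
    (hk : ∀ x, Measurable (k x)) (hk' : Measurable (k' x₀))
    (hfk : Integrable (fun a => f a * k x₀ a) μ) (hle : ∀ x ∈ s, ∀ a, |k' x a| ≤ w a)
    (hderiv : ∀ x ∈ s, ∀ a, HasDerivAt (k · a) (k' x a) x) :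
    HasDerivAt (fun x => ∫ a, f a * k x a ∂μ) (∫ a, f a * k' x₀ a ∂μ) x₀ := by
  refine (hasDerivAt_integral_of_dominated_loc_of_deriv_le hs (F := fun x a => f a * k x a)
    (F' := fun x a => f a * k' x a) (.of_forall fun x => hf.mul (hk x).aestronglyMeasurable) hfk
    (hf.mul hk'.aestronglyMeasurable) (.of_forall fun a x hx => ?_) hfw.norm
    (.of_forall fun a x hx => (hderiv x hx a).const_mul (f a))).2
  rw [norm_mul, norm_mul]
  gcongr
  exact (hle x hx a).trans (le_abs_self _)

lemma aestronglyMeasurable_of_mul_exp {α : Type*} [MeasurableSpace α] {μ : Measure α}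
    {f g : α → ℝ} (hg : Measurable g) (h : AEStronglyMeasurable (fun a => f a * Real.exp (g a)) μ) :
    AEStronglyMeasurable f μ := by
  refine (h.mul hg.neg.exp.aestronglyMeasurable).congr (.of_forall fun a => ?_)
  simp [mul_assoc, ← Real.exp_add]

lemma integrable_mul_of_one_le_weight {α : Type*} [MeasurableSpace α] {μ : Measure α}
    {f g w : α → ℝ} (hw : AEStronglyMeasurable w μ) (hw_le : ∀ a, 1 ≤ w a)
    (h : Integrable (fun a => w a * f a * g a) μ) : Integrable (fun a => f a * g a) μ := by
  have hinv : ∀ a, ‖(w a)⁻¹‖ ≤ 1 := fun a => by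
    rw [norm_inv]
    exact inv_le_one_of_one_le₀ ((hw_le a).trans (le_abs_self _))
  refine (h.bdd_mul hw.inv₀ (.of_forall hinv)).congr (.of_forall fun a => ?_)
  have : w a ≠ 0 := (one_pos.trans_le (hw_le a)).ne'
  simp only [Pi.inv_apply]
  field_simp

section GaussianWeight

variable {V V' : ℝ}

lemma abs_pow_le_mul_exp_mul_sq {a : ℝ} (ha : 0 < a) (n : ℕ) (t : ℝ) :
    |t| ^ n ≤ n.factorial * Real.exp (1 / (4 * a)) * Real.exp (a * t ^ 2) := by
  have am_gm : |t| ≤ 1 / (4 * a) + a * t ^ 2 := by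
    have h : 1 / (4 * a) + a * t ^ 2 - |t| = (2 * a * |t| - 1) ^ 2 / (4 * a) := by
      rw [← sq_abs t]
      field_simp
      ring
    have : 0 ≤ (2 * a * |t| - 1) ^ 2 / (4 * a) := by positivity
    linarith
  calc |t| ^ n ≤ n.factorial * Real.exp |t| :=
        (div_le_iff₀' (by positivity)).mp (Real.pow_div_factorial_le_exp _ (abs_nonneg t) n)
    _ ≤ n.factorial * Real.exp (1 / (4 * a) + a * t ^ 2) := by gcongr
    _ = _ := by rw [Real.exp_add, mul_assoc]

lemma exp_neg_sub_sq_div_le (hV : 0 < V) (hVV' : V < V') (ω x z : ℝ) :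
    Real.exp (-(z - x) ^ 2 / (2 * V)) ≤
      Real.exp ((x - ω) ^ 2 / (2 * (V' - V))) * Real.exp (-(z - ω) ^ 2 / (2 * V')) := by
  rw [← Real.exp_add, Real.exp_le_exp, ← sub_nonneg]
  have hd : 0 < V' - V := sub_pos.2 hVV'
  have hV' : 0 < V' := hV.trans hVV'
  have complete_square :
      (x - ω) ^ 2 / (2 * (V' - V)) + -(z - ω) ^ 2 / (2 * V') - -(z - x) ^ 2 / (2 * V) =
        (V * (x - ω) - (V' - V) * (z - x)) ^ 2 / (2 * V * V' * (V' - V)) := by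
    field_simp
    ring
  rw [complete_square]
  positivity

lemma exists_abs_pow_mul_exp_neg_sq_div_le (n : ℕ) (hV : 0 < V) (hVV' : V < V') :
    ∃ C, 0 ≤ C ∧ ∀ t : ℝ,
      |t| ^ n * Real.exp (-t ^ 2 / (2 * V)) ≤ C * Real.exp (-t ^ 2 / (2 * V')) := by
  have ha : 0 < 1 / (2 * V) - 1 / (2 * V') :=
    sub_pos.2 (one_div_lt_one_div_of_lt (by positivity) (by linarith))
  refine ⟨n.factorial * Real.exp (1 / (4 * (1 / (2 * V) - 1 / (2 * V')))), by positivity,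
    fun t => ?_⟩
  have split_exp : Real.exp (-t ^ 2 / (2 * V')) =
      Real.exp ((1 / (2 * V) - 1 / (2 * V')) * t ^ 2) * Real.exp (-t ^ 2 / (2 * V)) := by
    rw [← Real.exp_add]
    ring_nf
  rw [split_exp, ← mul_assoc]
  gcongr
  exact abs_pow_le_mul_exp_mul_sq ha n t

lemma exists_forall_abs_sub_pow_mul_exp_le (n : ℕ) (hV : 0 < V) (hVV' : V < V') (ω : ℝ) :
    ∃ C, ∀ W ∈ Set.Ioc 0 V, ∀ x, |x - ω| ≤ 1 → ∀ z,
      |(z - x) ^ n * Real.exp (-(z - x) ^ 2 / (2 * W))| ≤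
        C * Real.exp (-(z - ω) ^ 2 / (2 * V')) := by
  obtain ⟨U, hVU, hUV'⟩ := exists_between hVV'
  have hU : 0 < U := hV.trans hVU
  have : 0 < V' - U := sub_pos.2 hUV'
  obtain ⟨C, hC, hle⟩ := exists_abs_pow_mul_exp_neg_sq_div_le n hV hVU
  refine ⟨C * Real.exp (1 / (2 * (V' - U))), fun W hW x hx z => ?_⟩
  have hW0 : 0 < W := hW.1
  rw [abs_mul, abs_pow, Real.abs_exp]
  calc |z - x| ^ n * Real.exp (-(z - x) ^ 2 / (2 * W))
      ≤ |z - x| ^ n * Real.exp (-(z - x) ^ 2 / (2 * V)) := by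
        simp only [neg_div]
        gcongr
        exact hW.2
    _ ≤ C * Real.exp (-(z - x) ^ 2 / (2 * U)) := hle _
    _ ≤ C * (Real.exp ((x - ω) ^ 2 / (2 * (V' - U))) * Real.exp (-(z - ω) ^ 2 / (2 * V'))) := by
        gcongr
        exact exp_neg_sub_sq_div_le hU hUV' ω x z
    _ ≤ C * (Real.exp (1 / (2 * (V' - U))) * Real.exp (-(z - ω) ^ 2 / (2 * V'))) := by
        gcongr
        exact (sq_le_one_iff_abs_le_one _).2 hx
    _ = _ := by rw [mul_assoc]

lemma hasDerivAt_exp_neg_sub_sq_div_variance (hV : V ≠ 0) (t : ℝ) :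
    HasDerivAt (fun W => Real.exp (-t ^ 2 / (2 * W)))
      (t ^ 2 / (2 * V ^ 2) * Real.exp (-t ^ 2 / (2 * V))) V := by
  have h := ((hasDerivAt_const V (-t ^ 2)).fun_div ((hasDerivAt_id V).const_mul 2)
    (by simpa using hV)).exp
  refine h.congr_deriv ?_
  simp only [id_eq]
  field_simp
  ring

lemma hasDerivAt_sub_pow_mul_exp_center (n : ℕ) (hV : V ≠ 0) (z ω : ℝ) :
    HasDerivAt (fun x => (z - x) ^ n * Real.exp (-(z - x) ^ 2 / (2 * V)))
      ((z - ω) ^ (n + 1) * Real.exp (-(z - ω) ^ 2 / (2 * V)) / V -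
        n * ((z - ω) ^ (n - 1) * Real.exp (-(z - ω) ^ 2 / (2 * V)))) ω := by
  have hsub : HasDerivAt (fun x => z - x) (-1) ω := (hasDerivAt_id ω).const_sub z
  refine ((hsub.fun_pow n).fun_mul ((hsub.fun_pow 2).fun_neg.div_const (2 * V)).exp).congr_deriv ?_
  push_cast
  field_simp
  ring

end GaussianWeight

/-- The unnormalized `n`-th moment about `ω` of the measure `f dμ` weighted by the Gaussian
`exp (-(z - ω)² / (2V))`. For `f = p` and `μ` Lebesgue measure, the moments `M_n` satisfy
`Z_out = M₀` and `g_out = M₁ / (V M₀)`. -/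
noncomputable def gaussianMoment (μ : Measure ℝ) (f : ℝ → ℝ) (n : ℕ) (ω V : ℝ) : ℝ :=
  ∫ z, f z * ((z - ω) ^ n * Real.exp (-(z - ω) ^ 2 / (2 * V))) ∂μ

section GaussianMoment

variable {μ : Measure ℝ} {f : ℝ → ℝ} {V V' ω : ℝ}

lemma integrable_mul_sub_pow_mul_exp (n : ℕ) (hV : 0 < V) (hVV' : V < V')
    (hf : Integrable (fun z => f z * Real.exp (-(z - ω) ^ 2 / (2 * V'))) μ) :
    Integrable (fun z => f z * ((z - ω) ^ n * Real.exp (-(z - ω) ^ 2 / (2 * V)))) μ := by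
  have hfm : AEStronglyMeasurable f μ := aestronglyMeasurable_of_mul_exp (by fun_prop) hf.1
  obtain ⟨C, hC⟩ := exists_forall_abs_sub_pow_mul_exp_le n hV hVV' ω
  refine (hf.norm.const_mul C).mono' (by fun_prop) (.of_forall fun z => ?_)
  rw [norm_mul (f z), norm_mul (f z), Real.norm_of_nonneg (Real.exp_pos _).le, mul_left_comm C]
  exact mul_le_mul_of_nonneg_left (hC V ⟨hV, le_rfl⟩ ω (by simp) z) (norm_nonneg _)

theorem hasDerivAt_gaussianMoment_variance (n : ℕ) (hV : 0 < V) (hVV' : V < V')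
    (hf : Integrable (fun z => f z * Real.exp (-(z - ω) ^ 2 / (2 * V'))) μ) :
    HasDerivAt (gaussianMoment μ f n ω) (gaussianMoment μ f (n + 2) ω V / (2 * V ^ 2)) V := by
  obtain ⟨U, hVU, hUV'⟩ := exists_between hVV'
  obtain ⟨C, hC⟩ := exists_forall_abs_sub_pow_mul_exp_le (n + 2) (hV.trans hVU) hUV' ω
  have pos_of_mem : ∀ W ∈ Set.Ioo (V / 2) U, 0 < W := fun W hW => (half_pos hV).trans hW.1
  have key := hasDerivAt_integral_mul_of_abs_deriv_le
    (k := fun W z => (z - ω) ^ n * Real.exp (-(z - ω) ^ 2 / (2 * W)))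
    (k' := fun W z => (z - ω) ^ (n + 2) * Real.exp (-(z - ω) ^ 2 / (2 * W)) / (2 * W ^ 2))
    (w := fun z => C * Real.exp (-(z - ω) ^ 2 / (2 * V')) / (2 * (V / 2) ^ 2))
    (Ioo_mem_nhds (half_lt_self hV) hVU) (aestronglyMeasurable_of_mul_exp (by fun_prop) hf.1)
    ((hf.const_mul (C / (2 * (V / 2) ^ 2))).congr (.of_forall fun z => by ring))
    (fun W => by fun_prop) (by fun_prop) (integrable_mul_sub_pow_mul_exp n hV hVV' hf)
    (fun W hW z => ?_) (fun W hW z => ?_)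
  · simp only [mul_div_assoc', integral_div] at key
    exact key
  · have hkernel := hC W ⟨pos_of_mem W hW, hW.2.le⟩ ω (by simp) z
    rw [abs_div, abs_of_nonneg (a := 2 * W ^ 2) (by positivity)]
    have : 0 ≤ C * Real.exp (-(z - ω) ^ 2 / (2 * V')) := (abs_nonneg _).trans hkernel
    gcongr
    exact hW.1.le
  · refine ((hasDerivAt_exp_neg_sub_sq_div_variance (pos_of_mem W hW).ne' (z - ω)).const_mul
      ((z - ω) ^ n)).congr_deriv ?_
    ring

theorem hasDerivAt_gaussianMoment_center (n : ℕ) (hV : 0 < V) (hVV' : V < V')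
    (hf : Integrable (fun z => f z * Real.exp (-(z - ω) ^ 2 / (2 * V'))) μ) :
    HasDerivAt (fun x => gaussianMoment μ f n x V)
      (gaussianMoment μ f (n + 1) ω V / V - n * gaussianMoment μ f (n - 1) ω V) ω := by
  obtain ⟨C₁, hC₁⟩ := exists_forall_abs_sub_pow_mul_exp_le (n + 1) hV hVV' ω
  obtain ⟨C₂, hC₂⟩ := exists_forall_abs_sub_pow_mul_exp_le (n - 1) hV hVV' ω
  have key := hasDerivAt_integral_mul_of_abs_deriv_le
    (k := fun x z => (z - x) ^ n * Real.exp (-(z - x) ^ 2 / (2 * V)))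
    (k' := fun x z => (z - x) ^ (n + 1) * Real.exp (-(z - x) ^ 2 / (2 * V)) / V -
      n * ((z - x) ^ (n - 1) * Real.exp (-(z - x) ^ 2 / (2 * V))))
    (w := fun z => C₁ * Real.exp (-(z - ω) ^ 2 / (2 * V')) / V +
      n * (C₂ * Real.exp (-(z - ω) ^ 2 / (2 * V'))))
    (Metric.closedBall_mem_nhds ω one_pos) (aestronglyMeasurable_of_mul_exp (by fun_prop) hf.1)
    ((hf.const_mul (C₁ / V + n * C₂)).congr (.of_forall fun z => by ring))
    (fun x => by fun_prop) (by fun_prop) (integrable_mul_sub_pow_mul_exp n hV hVV' hf)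
    (fun x hx z => ?_) (fun x _ z => hasDerivAt_sub_pow_mul_exp_center n hV.ne' z x)
  · have h₁ := integrable_mul_sub_pow_mul_exp (n + 1) hV hVV' hf
    have h₂ := integrable_mul_sub_pow_mul_exp (n - 1) hV hVV' hf
    refine key.congr_deriv ?_
    rw [gaussianMoment, gaussianMoment, ← integral_div, ← integral_const_mul,
      ← integral_sub (h₁.div_const V) (h₂.const_mul _)]
    congr 1 with z
    ring
  · refine (abs_sub _ _).trans ?_
    rw [abs_div, abs_of_pos hV, abs_mul (n : ℝ), Nat.abs_cast]
    gcongr ?_ / V + n * ?_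
    · exact hC₁ V ⟨hV, le_rfl⟩ x hx z
    · exact hC₂ V ⟨hV, le_rfl⟩ x hx z

end GaussianMoment

section OutputChannel

variable {p : ℝ → ℝ} {V V' ω : ℝ}

lemma Zout_eq_gaussianMoment (p : ℝ → ℝ) (ω V : ℝ) :
    Zout p ω V = gaussianMoment volume p 0 ω V := by
  simp only [Zout, gaussianMoment, pow_zero, one_mul]

lemma gout_eq_gaussianMoment_div (p : ℝ → ℝ) (ω V : ℝ) :
    gout p ω V = gaussianMoment volume p 1 ω V / (V * gaussianMoment volume p 0 ω V) := by
  simp only [gout, Zout_eq_gaussianMoment, gaussianMoment, pow_one, mul_assoc]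

lemma log_Zmu (hV : 0 < V) (hZ : Zout p ω V ≠ 0) :
    Real.log (Zmu p ω V) = Real.log (Zout p ω V) - Real.log (2 * Real.pi * V) / 2 := by
  have hpos : 0 < 2 * Real.pi * V := by positivity
  rw [Zmu, Real.log_mul (inv_pos.2 (Real.sqrt_pos.2 hpos)).ne' hZ, Real.log_inv,
    Real.log_sqrt hpos.le]
  ring

theorem hasDerivAt_gout_center (hV : 0 < V) (hVV' : V < V')
    (hp : Integrable (fun z => p z * Real.exp (-(z - ω) ^ 2 / (2 * V'))))
    (hZ : Zout p ω V ≠ 0) :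
    HasDerivAt (fun x => gout p x V)
      (gaussianMoment volume p 2 ω V / (V ^ 2 * Zout p ω V) - 1 / V - gout p ω V ^ 2) ω := by
  simp only [gout_eq_gaussianMoment_div, Zout_eq_gaussianMoment] at hZ ⊢
  have h₀ : HasDerivAt (fun x => gaussianMoment volume p 0 x V)
      (gaussianMoment volume p 1 ω V / V) ω := by
    simpa using hasDerivAt_gaussianMoment_center 0 hV hVV' hp
  have h₁ : HasDerivAt (fun x => gaussianMoment volume p 1 x V)
      (gaussianMoment volume p 2 ω V / V - gaussianMoment volume p 0 ω V) ω := by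
    simpa using hasDerivAt_gaussianMoment_center 1 hV hVV' hp
  refine (h₁.fun_div (h₀.const_mul V) (mul_ne_zero hV.ne' hZ)).congr_deriv ?_
  field_simp

theorem hasDerivAt_log_Zmu_variance (hV : 0 < V) (hVV' : V < V')
    (hp : Integrable (fun z => p z * Real.exp (-(z - ω) ^ 2 / (2 * V'))))
    (hZ : Zout p ω V ≠ 0) :
    HasDerivAt (fun W => Real.log (Zmu p ω W))
      (1 / 2 * (gaussianMoment volume p 2 ω V / (V ^ 2 * Zout p ω V) - 1 / V)) V := by
  have hZout : HasDerivAt (Zout p ω) (gaussianMoment volume p 2 ω V / (2 * V ^ 2)) V := by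
    rw [show Zout p ω = gaussianMoment volume p 0 ω from funext (Zout_eq_gaussianMoment p ω)]
    exact hasDerivAt_gaussianMoment_variance 0 hV hVV' hp
  have hlog_scale : HasDerivAt (fun W => Real.log (2 * Real.pi * W)) (1 / V) V := by
    refine (((hasDerivAt_id V).const_mul (2 * Real.pi)).log (by positivity)).congr_deriv ?_
    simp only [id_eq]
    field_simp
  have hlog_eq : (fun W => Real.log (Zmu p ω W)) =ᶠ[nhds V]
      fun W => Real.log (Zout p ω W) - Real.log (2 * Real.pi * W) / 2 := by
    filter_upwards [lt_mem_nhds hV, hZout.continuousAt.eventually_ne hZ] with W hW hZW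
    exact log_Zmu hW hZW
  refine (((hZout.log hZ).fun_sub (hlog_scale.div_const 2)).congr_of_eventuallyEq
    hlog_eq).congr_deriv ?_
  field_simp

end OutputChannel

theorem stmt14_general (p : ℝ → ℝ) (V ω : ℝ) (hV : 0 < V)
    (hdom : ∃ V' > V, Integrable (fun z => p z * Real.exp (-(z - ω) ^ 2 / (2 * V'))))
    (hZ : 0 < Zout p ω V) :
    HasDerivAt (fun V'' => Real.log (Zmu p ω V''))
      (1 / 2 * (deriv (fun ω' => gout p ω' V) ω + gout p ω V ^ 2)) V := by
  obtain ⟨V', hVV', hp⟩ := hdom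
  rw [(hasDerivAt_gout_center hV hVV' hp hZ.ne').deriv, sub_add_cancel]
  exact hasDerivAt_log_Zmu_variance hV hVV' hp hZ.ne'

/-- variance identity for the normalized log-partition: under a domination
hypothesis at some `V' > V` and `Z_out(ω,V) > 0`, the function `V'' ↦ log Z^μ(ω,V'')` has
derivative at `V` equal to `(1/2)·(g'_out(ω,V) + g_out(ω,V)²)`, where `g'_out(ω,V)` is the
derivative at `ω` of `ω' ↦ g_out(ω',V)`. -/
theorem stmt14 (p : ℝ → ℝ) (hp : Measurable p) (hp0 : ∀ z, 0 ≤ p z)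
    (V ω : ℝ) (hV : 0 < V)
    (hdom : ∃ V' > V,
      Integrable (fun z => (1 + z ^ 2) * p z * Real.exp (-(z - ω) ^ 2 / (2 * V'))))
    (hZ : 0 < Zout p ω V) :
    HasDerivAt (fun V'' => Real.log (Zmu p ω V''))
      (1 / 2 * (deriv (fun ω' => gout p ω' V) ω + gout p ω V ^ 2)) V :=
  stmt14_general p V ω hV
    (hdom.imp fun _ ⟨hVV', hint⟩ => ⟨hVV',
      integrable_mul_of_one_le_weight (by fun_prop) (fun z => by nlinarith) hint⟩) hZ
end
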